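/- Let U = α + η V + ω Q where V = |X₁| componentwise with X₁ ~ N_n(0,Ω), and Q ~ N_n(0,Ω), with X₁ and Q independent. Then the density of U is f_U(u) = 2 Σ_{l=1}^{2^{n-1}} φ_n(u - α; A_l) Φ_n(c_l; 0, B_l), where A_l = ω²Ω + η²Ω_l, c_l = η Ω_l A_l^{-1}(u - α), B_l = Ω_l - η² Ω_l A_l^{-1} Ω_l, the sum is over representatives l of the 2^{n-1} sign classes {l,-l}, and Ω_l = D(l)ΩD(l). -/

import Mathlib

open Real MeasureTheory Matrix

/-- Multivariate Gaussian density with mean `m` and covariance `S`. -/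
noncomputable def gaussDensity {n : ℕ} (m : Fin n → ℝ) (S : Matrix (Fin n) (Fin n) ℝ)
    (x : Fin n → ℝ) : ℝ :=
  (2 * π) ^ (-(n:ℝ)/2) * S.det ^ (-(1:ℝ)/2) *
    Real.exp (-((x - m) ⬝ᵥ S⁻¹.mulVec (x - m)) / 2)

/-- Multivariate Gaussian orthant cdf `Φ_n(c; 0, S) = P(Z ≤ c)` for `Z ~ N_n(0,S)`. -/
noncomputable def gaussCdf {n : ℕ} (c : Fin n → ℝ) (S : Matrix (Fin n) (Fin n) ℝ) : ℝ :=
  ((volume.withDensity fun x => ENNReal.ofReal (gaussDensity 0 S x))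
    {x : Fin n → ℝ | ∀ i, x i ≤ c i}).toReal

/-- Sign vector associated to `b : Fin n → Bool`. -/
noncomputable def sgn {n : ℕ} (b : Fin n → Bool) (i : Fin n) : ℝ := if b i then 1 else -1

/-- Signed correlation matrix `Ω_l = D(l) Ω D(l)`. -/
noncomputable def sgnMat {n : ℕ} (b : Fin n → Bool) (Ω : Matrix (Fin n) (Fin n) ℝ) :
    Matrix (Fin n) (Fin n) ℝ :=
  Matrix.of fun i j => sgn b i * sgn b j * Ω i j

/-!
Off a null set every `x` lies in exactly one orthant, so the law of `|X₁|` is the sum over all sign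
vectors `l` of `N(0, Ω_l)` restricted to the nonnegative orthant. Convolving such a piece with the
law of the noise integrates, over `v ≥ 0`, the product of the densities of the noise and of
`N(0, Ω_l)`. Completing the square turns this product into the marginal density of the sum times
the conditional density of `v`, whose mean is `c_l` and whose covariance is `B_l`; reflecting about
`c_l` identifies the integral of the latter over `v ≥ 0` with `Φ(c_l; 0, B_l)`. Finally `l` and
`-l` contribute equally.
-/

section SignVectors

variable {n : ℕ}

lemma sgn_mul_self (b : Fin n → Bool) : sgn b * sgn b = 1 := by
  ext i
  cases h : b i <;> simp [sgn, h]

lemma abs_sgn (b : Fin n → Bool) (i : Fin n) : |sgn b i| = 1 := by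
  cases h : b i <;> simp [sgn, h]

lemma sgn_not (b : Fin n → Bool) : sgn (fun i => !b i) = -sgn b := by
  ext i
  cases h : b i <;> simp [sgn, h]

lemma sgnMat_not (b : Fin n → Bool) (Ω : Matrix (Fin n) (Fin n) ℝ) :
    sgnMat (fun i => !b i) Ω = sgnMat b Ω := by
  ext i j
  simp [sgnMat, sgn_not]

lemma isUnit_diagonal_sgn (b : Fin n → Bool) : IsUnit (diagonal (sgn b)) :=
  isUnit_diagonal.2 (IsUnit.of_mul_eq_one _ (sgn_mul_self b))

lemma diagonal_sgn_mulVec (b : Fin n → Bool) (x : Fin n → ℝ) :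
    diagonal (sgn b) *ᵥ x = sgn b * x :=
  funext (mulVec_diagonal _ _)

lemma sgnMat_eq_diagonal_mul_mul (b : Fin n → Bool) (Ω : Matrix (Fin n) (Fin n) ℝ) :
    sgnMat b Ω = diagonal (sgn b) * Ω * (diagonal (sgn b))ᵀ := by
  ext i j
  simp [sgnMat, mul_right_comm]

lemma abs_eq_sgn_mul {b : Fin n → Bool} {x : Fin n → ℝ} (hx : 0 ≤ sgn b * x) :
    (fun i => |x i|) = sgn b * x := by
  ext i
  rw [← abs_of_nonneg (hx i), Pi.mul_apply, abs_mul, abs_sgn, one_mul]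

lemma existsUnique_nonneg_sgn_mul {x : Fin n → ℝ} (hx : ∀ i, x i ≠ 0) :
    ∃! b : Fin n → Bool, 0 ≤ sgn b * x := by
  have nonneg_iff (b : Fin n → Bool) (i : Fin n) :
      0 ≤ sgn b i * x i ↔ b i = decide (0 ≤ x i) := by
    cases h : b i
    · simp [sgn, h, (hx i).le_iff_lt]
    · simp [sgn, h]
  exact ⟨fun i => decide (0 ≤ x i), fun i => (nonneg_iff _ i).2 rfl,
    fun b hb => funext fun i => (nonneg_iff b i).1 (hb i)⟩

lemma sum_bool_pi_eq_two_mul_sum_filter {ι M : Type*} [Fintype ι] [DecidableEq ι]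
    [NonAssocSemiring M] (F : (ι → Bool) → M) (hF : ∀ b, F (fun j => !b j) = F b) (i : ι) :
    ∑ b, F b = 2 * ∑ b ∈ Finset.univ.filter (fun b : ι → Bool => b i = true), F b := by
  rw [← Finset.sum_filter_add_sum_filter_not Finset.univ (fun b : ι → Bool => b i = true) F,
    two_mul]
  congr 1
  exact Finset.sum_nbij' (fun b j => !b j) (fun b j => !b j) (by simp) (by simp) (by simp)
    (by simp) (by simp [hF])

end SignVectors

section Congruence

variable {ι : Type*} [Fintype ι] [DecidableEq ι]

lemma posDef_mul_mul_transpose {A S : Matrix ι ι ℝ} (hA : IsUnit A) (hS : S.PosDef) :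
    (A * S * Aᵀ).PosDef := by
  simpa using hS.mul_mul_conjTranspose_same (vecMul_injective_of_isUnit hA)

open scoped MatrixOrder ComplexOrder Matrix.Norms.L2Operator in
lemma exists_isUnit_eq_mul_transpose {S : Matrix ι ι ℝ} (hS : S.PosDef) :
    ∃ B : Matrix ι ι ℝ, IsUnit B ∧ S = B * Bᵀ := by
  simpa [star_eq_conjTranspose] using
    CStarAlgebra.isStrictlyPositive_iff_eq_mul_star_self.1 hS.isStrictlyPositive

lemma sgnMat_posDef {n : ℕ} (b : Fin n → Bool) {Ω : Matrix (Fin n) (Fin n) ℝ} (hΩ : Ω.PosDef) :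
    (sgnMat b Ω).PosDef :=
  sgnMat_eq_diagonal_mul_mul b Ω ▸ posDef_mul_mul_transpose (isUnit_diagonal_sgn b) hΩ

end Congruence

section LinearGaussianModel

variable {ι κ : Type*} [Fintype κ]

/-- The covariance of `H v + e` for independent centered `v` and `e` with covariances `R`, `P`. -/
noncomputable def marginalCov (P : Matrix ι ι ℝ) (H : Matrix ι κ ℝ) (R : Matrix κ κ ℝ) :
    Matrix ι ι ℝ :=
  P + H * R * Hᵀ

lemma marginalCov_posDef [Finite ι] {P : Matrix ι ι ℝ} (hP : P.PosDef) (H : Matrix ι κ ℝ)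
    {R : Matrix κ κ ℝ} (hR : R.PosSemidef) : (marginalCov P H R).PosDef := by
  simpa [marginalCov] using hP.add_posSemidef (hR.mul_mul_conjTranspose_same H)

variable [Fintype ι] [DecidableEq ι]

/-- The matrix of the regression of `v` on `H v + e`, where `v` and `e` are independent and
centered with covariances `R` and `P`: the conditional mean of `v` given `H v + e = w` is
`regressionMatrix P H R *ᵥ w`. -/
noncomputable def regressionMatrix (P : Matrix ι ι ℝ) (H : Matrix ι κ ℝ) (R : Matrix κ κ ℝ) :
    Matrix κ ι ℝ :=
  R * Hᵀ * (marginalCov P H R)⁻¹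

/-- The conditional covariance of `v` given `H v + e`, where `v` and `e` are independent and
centered with covariances `R` and `P`. -/
noncomputable def condCov (P : Matrix ι ι ℝ) (H : Matrix ι κ ℝ) (R : Matrix κ κ ℝ) :
    Matrix κ κ ℝ :=
  R - regressionMatrix P H R * H * R

lemma regressionMatrix_eq_condCov_mul {P : Matrix ι ι ℝ} (hP : P.PosDef) (H : Matrix ι κ ℝ)
    {R : Matrix κ κ ℝ} (hR : R.PosSemidef) :
    regressionMatrix P H R = condCov P H R * Hᵀ * P⁻¹ := by
  have hA : IsUnit (marginalCov P H R).det := (marginalCov_posDef hP H hR).det_pos.ne'.isUnit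
  have hsplit : R * Hᵀ = regressionMatrix P H R * P + regressionMatrix P H R * (H * R * Hᵀ) := by
    rw [← Matrix.mul_add]
    exact (nonsing_inv_mul_cancel_right _ _ hA).symm
  have hmul : regressionMatrix P H R * P = condCov P H R * Hᵀ := by
    rw [eq_sub_of_add_eq hsplit.symm, condCov]
    simp only [Matrix.sub_mul, Matrix.mul_assoc]
  rw [← hmul, mul_nonsing_inv_cancel_right _ _ hP.det_pos.ne'.isUnit]

variable [DecidableEq κ] {P : Matrix ι ι ℝ} {R : Matrix κ κ ℝ}

lemma inv_add_transpose_mul_inv_mul_posDef (hP : P.PosDef) (H : Matrix ι κ ℝ) (hR : R.PosDef) :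
    (R⁻¹ + Hᵀ * P⁻¹ * H).PosDef := by
  simpa using hR.inv.add_posSemidef (hP.inv.posSemidef.conjTranspose_mul_mul_same H)

lemma condCov_eq_inv (hP : P.PosDef) (H : Matrix ι κ ℝ) (hR : R.PosDef) :
    condCov P H R = (R⁻¹ + Hᵀ * P⁻¹ * H)⁻¹ := by
  have hRR : (R⁻¹)⁻¹ = R := nonsing_inv_nonsing_inv _ hR.det_pos.ne'.isUnit
  have hPP : (P⁻¹)⁻¹ = P := nonsing_inv_nonsing_inv _ hP.det_pos.ne'.isUnit
  rw [add_mul_mul_inv_eq_sub _ _ _ _ hR.inv.isUnit hP.inv.isUnit, hRR, hPP]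
  · rfl
  · simpa only [hRR, hPP, marginalCov] using (marginalCov_posDef hP H hR.posSemidef).isUnit

omit [DecidableEq κ] in
lemma condCov_posDef (hP : P.PosDef) (H : Matrix ι κ ℝ) (hR : R.PosDef) :
    (condCov P H R).PosDef := by
  classical
  exact condCov_eq_inv hP H hR ▸ (inv_add_transpose_mul_inv_mul_posDef hP H hR).inv

lemma inv_condCov (hP : P.PosDef) (H : Matrix ι κ ℝ) (hR : R.PosDef) :
    (condCov P H R)⁻¹ = R⁻¹ + Hᵀ * P⁻¹ * H := by
  rw [condCov_eq_inv hP H hR,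
    nonsing_inv_nonsing_inv _ (inv_add_transpose_mul_inv_mul_posDef hP H hR).det_pos.ne'.isUnit]

omit [DecidableEq κ] in
lemma inv_marginalCov (hP : P.PosDef) (H : Matrix ι κ ℝ) (hR : R.PosDef) :
    (marginalCov P H R)⁻¹ = P⁻¹ - P⁻¹ * H * condCov P H R * Hᵀ * P⁻¹ := by
  classical
  rw [marginalCov, condCov_eq_inv hP H hR, add_mul_mul_inv_eq_sub _ _ _ _ hP.isUnit hR.isUnit
    (inv_add_transpose_mul_inv_mul_posDef hP H hR).isUnit]

lemma det_marginalCov_mul_det_condCov (hP : P.PosDef) (H : Matrix ι κ ℝ) (hR : R.PosDef) :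
    (marginalCov P H R).det * (condCov P H R).det = P.det * R.det := by
  have hC : (condCov P H R).det ≠ 0 := (condCov_posDef hP H hR).det_pos.ne'
  have hR0 : R.det ≠ 0 := hR.det_pos.ne'
  have hfac : (condCov P H R)⁻¹ * R = 1 + Hᵀ * P⁻¹ * (H * R) := by
    rw [inv_condCov hP H hR, Matrix.add_mul, nonsing_inv_mul _ hR0.isUnit]
    simp only [Matrix.mul_assoc]
  have hdet : (marginalCov P H R).det = P.det * ((condCov P H R)⁻¹ * R).det := by
    rw [hfac, marginalCov, det_add_mul _ _ hP.det_pos.ne'.isUnit]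
  rw [hdet, det_mul, det_nonsing_inv, Ring.inverse_eq_inv']
  field_simp

lemma dotProduct_inv_mulVec_add_dotProduct_inv_mulVec (hP : P.PosDef) (H : Matrix ι κ ℝ)
    (hR : R.PosDef) (w : ι → ℝ) (v : κ → ℝ) :
    (w - H *ᵥ v) ⬝ᵥ P⁻¹ *ᵥ (w - H *ᵥ v) + v ⬝ᵥ R⁻¹ *ᵥ v =
      w ⬝ᵥ (marginalCov P H R)⁻¹ *ᵥ w +
        (v - regressionMatrix P H R *ᵥ w) ⬝ᵥ (condCov P H R)⁻¹ *ᵥ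
          (v - regressionMatrix P H R *ᵥ w) := by
  have hC := condCov_posDef hP H hR
  have hPt : (P⁻¹)ᵀ = P⁻¹ := by simpa using hP.inv.isHermitian.eq
  let := hC.inv.isUnit.invertible
  have hcenter :
      v + ((condCov P H R)⁻¹⁻¹ * -(Hᵀ * P⁻¹)) *ᵥ w = v - regressionMatrix P H R *ᵥ w := by
    rw [nonsing_inv_nonsing_inv _ hC.det_pos.ne'.isUnit, Matrix.mul_neg, neg_mulVec,
      regressionMatrix_eq_condCov_mul hP H hR.posSemidef, Matrix.mul_assoc, sub_eq_add_neg]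
  have hschur : P⁻¹ - (-(Hᵀ * P⁻¹))ᴴ * (condCov P H R)⁻¹⁻¹ * -(Hᵀ * P⁻¹) =
      (marginalCov P H R)⁻¹ := by
    rw [nonsing_inv_nonsing_inv _ hC.det_pos.ne'.isUnit, inv_marginalCov hP H hR]
    simp [hPt, Matrix.mul_assoc]
  have h := schur_complement_eq₁₁ (-(Hᵀ * P⁻¹)) P⁻¹ v w hC.inv.isHermitian
  rw [hcenter, hschur, ← dotProduct_mulVec, ← dotProduct_mulVec, ← dotProduct_mulVec] at h
  simp only [star_trivial] at h
  rw [add_comm (w ⬝ᵥ _), ← h, inv_condCov hP H hR, fromBlocks_mulVec]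
  have hadj (y : ι → ℝ) : v ⬝ᵥ Hᵀ *ᵥ y = (H *ᵥ v) ⬝ᵥ y := by
    rw [dotProduct_mulVec, vecMul_transpose]
  simp only [mulVec_sub, dotProduct_sub, sub_dotProduct, Matrix.mul_assoc, Sum.elim_comp_inl,
    add_mulVec, ← mulVec_mulVec, Sum.elim_comp_inr, neg_mulVec,
    conjTranspose_eq_transpose_of_trivial, transpose_neg, transpose_mul, hPt, transpose_transpose,
    sumElim_dotProduct_sumElim, dotProduct_add, hadj, dotProduct_neg]
  ring

end LinearGaussianModel

section GaussianMeasure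

variable {n : ℕ}

lemma gaussDensity_eq_sub (m : Fin n → ℝ) (S : Matrix (Fin n) (Fin n) ℝ) (x : Fin n → ℝ) :
    gaussDensity m S x = gaussDensity 0 S (x - m) := by
  simp only [gaussDensity, sub_zero]

lemma gaussDensity_zero_neg (S : Matrix (Fin n) (Fin n) ℝ) (x : Fin n → ℝ) :
    gaussDensity 0 S (-x) = gaussDensity 0 S x := by
  simp only [gaussDensity, sub_zero, mulVec_neg, neg_dotProduct, dotProduct_neg, neg_neg]

lemma gaussDensity_nonneg {S : Matrix (Fin n) (Fin n) ℝ} (hS : S.PosDef) (m x : Fin n → ℝ) :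
    0 ≤ gaussDensity m S x := by
  have := hS.det_pos
  unfold gaussDensity
  positivity

@[fun_prop]
lemma continuous_gaussDensity (m : Fin n → ℝ) (S : Matrix (Fin n) (Fin n) ℝ) :
    Continuous (gaussDensity m S) := by
  unfold gaussDensity
  fun_prop

@[fun_prop]
lemma measurable_gaussDensity (m : Fin n → ℝ) (S : Matrix (Fin n) (Fin n) ℝ) :
    Measurable (gaussDensity m S) :=
  (continuous_gaussDensity m S).measurable

lemma gaussDensity_zero_one (x : Fin n → ℝ) :
    gaussDensity 0 1 x = ∏ i, ProbabilityTheory.gaussianPDFReal 0 1 (x i) := by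
  have hconst : (2 * π) ^ (-(n : ℝ) / 2) = ∏ _i : Fin n, (√(2 * π))⁻¹ := by
    rw [Finset.prod_const, Finset.card_fin, ← Real.rpow_natCast, Real.sqrt_eq_rpow,
      ← Real.rpow_neg (by positivity), ← Real.rpow_mul (by positivity)]
    ring_nf
  simp only [gaussDensity, ProbabilityTheory.gaussianPDFReal, det_one, one_rpow, inv_one, sub_zero,
    one_mulVec, dotProduct, mul_one, NNReal.coe_one]
  rw [hconst, Finset.prod_mul_distrib, ← Real.exp_sum, ← Finset.sum_div, Finset.sum_neg_distrib]
  simp only [sq]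

lemma gaussDensity_mulVec {A S : Matrix (Fin n) (Fin n) ℝ} (hA : IsUnit A) (hS : S.PosDef)
    (x : Fin n → ℝ) :
    gaussDensity 0 (A * S * Aᵀ) (A *ᵥ x) = |A.det|⁻¹ * gaussDensity 0 S x := by
  have hAdet : IsUnit A.det := (isUnit_iff_isUnit_det A).1 hA
  have hdet : (A * S * Aᵀ).det ^ (-(1 : ℝ) / 2) = |A.det|⁻¹ * S.det ^ (-(1 : ℝ) / 2) := by
    rw [det_mul, det_mul, det_transpose, mul_right_comm, ← abs_mul_abs_self,
      Real.mul_rpow (by positivity) hS.det_pos.le, Real.mul_rpow (by positivity) (by positivity),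
      ← Real.rpow_add (abs_pos.2 hAdet.ne_zero), ← Real.rpow_neg_one]
    norm_num
  have hquad : (A *ᵥ x) ⬝ᵥ (A * S * Aᵀ)⁻¹ *ᵥ (A *ᵥ x) = x ⬝ᵥ S⁻¹ *ᵥ x := by
    rw [dotProduct_comm, dotProduct_mulVec, ← mulVec_transpose, mulVec_mulVec, mulVec_mulVec,
      Matrix.mul_inv_rev, Matrix.mul_inv_rev, Matrix.mul_assoc, ← Matrix.mul_assoc Aᵀ⁻¹,
      nonsing_inv_mul_cancel_right _ _ hAdet,
      mul_nonsing_inv_cancel_left _ _ (by rwa [det_transpose]), dotProduct_comm]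
  simp only [gaussDensity, sub_zero, hdet, hquad]
  ring

/-- The centered Gaussian law `N(0, S)`, given by its density; it is only meaningful for positive
definite `S`. -/
noncomputable def centeredGaussian (S : Matrix (Fin n) (Fin n) ℝ) : Measure (Fin n → ℝ) :=
  volume.withDensity fun x => ENNReal.ofReal (gaussDensity 0 S x)

instance (S : Matrix (Fin n) (Fin n) ℝ) : SFinite (centeredGaussian S) :=
  inferInstanceAs (SFinite (volume.withDensity _))

lemma map_mulVec_centeredGaussian {A S : Matrix (Fin n) (Fin n) ℝ} (hA : IsUnit A)
    (hS : S.PosDef) :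
    (centeredGaussian S).map (A *ᵥ ·) = centeredGaussian (A * S * Aᵀ) := by
  have hdet : A.det ≠ 0 := ((isUnit_iff_isUnit_det A).1 hA).ne_zero
  have hmeas : Measurable (A *ᵥ · : (Fin n → ℝ) → Fin n → ℝ) := by fun_prop
  have hvol : volume.map (A *ᵥ ·) = ENNReal.ofReal |A.det|⁻¹ • (volume : Measure (Fin n → ℝ)) := by
    simpa only [toLin'_apply', coe_mulVecLin, abs_inv]
      using Real.map_matrix_volume_pi_eq_smul_volume_pi hdet
  refine Measure.ext_of_lintegral _ fun f hf => ?_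
  have hdens (x : Fin n → ℝ) : ENNReal.ofReal (gaussDensity 0 S x) = ENNReal.ofReal |A.det| *
      ENNReal.ofReal (gaussDensity 0 (A * S * Aᵀ) (A *ᵥ x)) := by
    rw [gaussDensity_mulVec hA hS, ← ENNReal.ofReal_mul (abs_nonneg _),
      mul_inv_cancel_left₀ (abs_ne_zero.2 hdet)]
  calc ∫⁻ y, f y ∂(centeredGaussian S).map (A *ᵥ ·)
    _ = ∫⁻ x, ENNReal.ofReal (gaussDensity 0 S x) * f (A *ᵥ x) := by
      rw [lintegral_map hf hmeas, centeredGaussian,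
        lintegral_withDensity_eq_lintegral_mul _ (by fun_prop) (by fun_prop)]
      rfl
    _ = ENNReal.ofReal |A.det| *
        ∫⁻ y, ENNReal.ofReal (gaussDensity 0 (A * S * Aᵀ) y) * f y ∂volume.map (A *ᵥ ·) := by
      simp_rw [hdens, mul_assoc]
      rw [lintegral_const_mul _ (by fun_prop), lintegral_map (by fun_prop) hmeas]
    _ = ∫⁻ y, f y ∂centeredGaussian (A * S * Aᵀ) := by
      rw [hvol, lintegral_smul_measure, smul_eq_mul, ← mul_assoc,
        ← ENNReal.ofReal_mul (abs_nonneg _), mul_inv_cancel₀ (abs_ne_zero.2 hdet),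
        ENNReal.ofReal_one, one_mul, centeredGaussian,
        lintegral_withDensity_eq_lintegral_mul _ (by fun_prop) hf]
      rfl

instance isProbabilityMeasure_centeredGaussian_one :
    IsProbabilityMeasure (centeredGaussian (1 : Matrix (Fin n) (Fin n) ℝ)) := by
  have hint : Integrable fun x : Fin n → ℝ => ∏ i, ProbabilityTheory.gaussianPDFReal 0 1 (x i) :=
    Integrable.fintype_prod fun _ => ProbabilityTheory.integrable_gaussianPDFReal 0 1
  refine ⟨?_⟩
  rw [centeredGaussian, withDensity_apply _ MeasurableSet.univ, setLIntegral_univ]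
  simp_rw [gaussDensity_zero_one]
  rw [← ofReal_integral_eq_lintegral_ofReal hint (ae_of_all _ fun x => Finset.prod_nonneg fun i _ =>
      ProbabilityTheory.gaussianPDFReal_nonneg 0 1 (x i)),
    integral_fintype_prod_volume_eq_prod]
  simp [ProbabilityTheory.integral_gaussianPDFReal_eq_one]

lemma isProbabilityMeasure_centeredGaussian {S : Matrix (Fin n) (Fin n) ℝ} (hS : S.PosDef) :
    IsProbabilityMeasure (centeredGaussian S) := by
  obtain ⟨B, hB, rfl⟩ := exists_isUnit_eq_mul_transpose hS
  have h := map_mulVec_centeredGaussian hB (PosDef.one (n := Fin n) (R := ℝ))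
  rw [Matrix.mul_one] at h
  exact h ▸ Measure.isProbabilityMeasure_map (by fun_prop)

end GaussianMeasure

lemma gaussDensity_sub_mulVec_mul {m n : ℕ} {P : Matrix (Fin m) (Fin m) ℝ} (hP : P.PosDef)
    (H : Matrix (Fin m) (Fin n) ℝ) {R : Matrix (Fin n) (Fin n) ℝ} (hR : R.PosDef)
    (w : Fin m → ℝ) (v : Fin n → ℝ) :
    gaussDensity 0 P (w - H *ᵥ v) * gaussDensity 0 R v =
      gaussDensity 0 (marginalCov P H R) w *
        gaussDensity (regressionMatrix P H R *ᵥ w) (condCov P H R) v := by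
  have hA := (marginalCov_posDef hP H hR.posSemidef).det_pos.le
  have hdet : P.det ^ (-(1 : ℝ) / 2) * R.det ^ (-(1 : ℝ) / 2) =
      (marginalCov P H R).det ^ (-(1 : ℝ) / 2) * (condCov P H R).det ^ (-(1 : ℝ) / 2) := by
    rw [← Real.mul_rpow hP.det_pos.le hR.det_pos.le, ← det_marginalCov_mul_det_condCov hP H hR,
      Real.mul_rpow hA (condCov_posDef hP H hR).det_pos.le]
  have hexp : rexp (-((w - H *ᵥ v) ⬝ᵥ P⁻¹ *ᵥ (w - H *ᵥ v)) / 2) * rexp (-(v ⬝ᵥ R⁻¹ *ᵥ v) / 2) =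
      rexp (-(w ⬝ᵥ (marginalCov P H R)⁻¹ *ᵥ w) / 2) *
        rexp (-((v - regressionMatrix P H R *ᵥ w) ⬝ᵥ (condCov P H R)⁻¹ *ᵥ
          (v - regressionMatrix P H R *ᵥ w)) / 2) := by
    rw [← Real.exp_add, ← Real.exp_add, ← add_div, ← add_div, ← neg_add, ← neg_add,
      dotProduct_inv_mulVec_add_dotProduct_inv_mulVec hP H hR]
  simp only [gaussDensity, sub_zero]
  rw [mul_mul_mul_comm, hexp, mul_mul_mul_comm (_ ^ _), hdet]
  ring

section Convolution

variable {G : Type*} [AddGroup G] {mG : MeasurableSpace G} [MeasurableAdd₂ G] [MeasurableNeg G]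

open scoped Measure in
lemma conv_withDensity (μ ν : Measure G) [SFinite μ] [SFinite ν] [ν.IsAddLeftInvariant]
    {g : G → ENNReal} (hg : Measurable g) :
    μ ∗ (ν.withDensity g) = ν.withDensity fun u => ∫⁻ x, g (-x + u) ∂μ := by
  refine Measure.ext_of_lintegral _ fun φ hφ => ?_
  calc ∫⁻ z, φ z ∂(μ ∗ ν.withDensity g)
    _ = ∫⁻ x, ∫⁻ y, g y * φ (x + y) ∂ν ∂μ := by
      rw [Measure.lintegral_conv hφ]
      refine lintegral_congr fun x => ?_
      rw [lintegral_withDensity_eq_lintegral_mul _ hg (by fun_prop)]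
      rfl
    _ = ∫⁻ x, ∫⁻ u, g (-x + u) * φ u ∂ν ∂μ := by
      refine lintegral_congr fun x => ?_
      simpa only [neg_add_cancel_left] using
        lintegral_add_left_eq_self (μ := ν) (fun u => g (-x + u) * φ u) x
    _ = ∫⁻ u, (∫⁻ x, g (-x + u) ∂μ) * φ u ∂ν := by
      rw [lintegral_lintegral_swap (by fun_prop)]
      exact lintegral_congr fun u => lintegral_mul_const _ (by fun_prop)
    _ = ∫⁻ u, φ u ∂ν.withDensity fun u => ∫⁻ x, g (-x + u) ∂μ := by
      rw [lintegral_withDensity_eq_lintegral_mul _ (by fun_prop) hφ]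
      rfl

end Convolution

section Orthants

variable {n : ℕ}

open scoped Function in
lemma map_abs_eq_sum_restrict_map_sgn_mul (μ : Measure (Fin n → ℝ)) (hμ : ∀ᵐ x ∂μ, ∀ i, x i ≠ 0) :
    μ.map (fun x i => |x i|) = ∑ b, (μ.map (sgn b * ·)).restrict (Set.Ici 0) := by
  have hmeas (b : Fin n → Bool) : Measurable (sgn b * · : (Fin n → ℝ) → Fin n → ℝ) := by fun_prop
  let O (b : Fin n → Bool) : Set (Fin n → ℝ) := (sgn b * ·) ⁻¹' Set.Ici 0
  have hO (b : Fin n → Bool) : MeasurableSet (O b) := hmeas b measurableSet_Ici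
  have hcover : μ = μ.restrict (⋃ b, O b) := by
    refine (Measure.restrict_eq_self_of_ae_mem ?_).symm
    filter_upwards [hμ] with x hx
    exact Set.mem_iUnion.2 (existsUnique_nonneg_sgn_mul hx).exists
  have hdisj : Pairwise (AEDisjoint μ on O) := fun b b' hbb' => by
    refine measure_eq_zero_iff_ae_notMem.2 ?_
    filter_upwards [hμ] with x hx hxO
    exact hbb' ((existsUnique_nonneg_sgn_mul hx).unique hxO.1 hxO.2)
  conv_lhs =>
    rw [hcover, Measure.restrict_iUnion_ae hdisj fun b => (hO b).nullMeasurableSet]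
  rw [Measure.map_sum (Measurable.aemeasurable (by fun_prop)), Measure.sum_fintype]
  refine Finset.sum_congr rfl fun b _ => ?_
  rw [Measure.restrict_map (hmeas b) measurableSet_Ici]
  refine Measure.map_congr ?_
  filter_upwards [ae_restrict_mem (hO b)] with x hx using abs_eq_sgn_mul hx

lemma map_abs_centeredGaussian {Ω : Matrix (Fin n) (Fin n) ℝ} (hΩ : Ω.PosDef) :
    (centeredGaussian Ω).map (fun x i => |x i|) =
      ∑ b, (centeredGaussian (sgnMat b Ω)).restrict (Set.Ici 0) := by
  have hne : ∀ᵐ x ∂centeredGaussian Ω, ∀ i, x i ≠ 0 :=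
    (withDensity_absolutelyContinuous _ _).ae_le
      (ae_all_iff.2 fun i => Measure.ae_eval_ne (μ := fun _ => volume) i 0)
  rw [map_abs_eq_sum_restrict_map_sgn_mul _ hne]
  congr! with b
  simpa only [diagonal_sgn_mulVec, ← sgnMat_eq_diagonal_mul_mul] using
    map_mulVec_centeredGaussian (isUnit_diagonal_sgn b) hΩ

lemma setLIntegral_Ici_gaussDensity {S : Matrix (Fin n) (Fin n) ℝ} (hS : S.PosDef)
    (c : Fin n → ℝ) :
    ∫⁻ v in Set.Ici 0, ENNReal.ofReal (gaussDensity c S v) = ENNReal.ofReal (gaussCdf c S) := by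
  have := isProbabilityMeasure_centeredGaussian hS
  have hpre : (c - ·) ⁻¹' {x : Fin n → ℝ | ∀ i, x i ≤ c i} = Set.Ici 0 := by
    ext v
    simp [Pi.le_def]
  have hmeas : MeasurableSet {x : Fin n → ℝ | ∀ i, x i ≤ c i} := measurableSet_Iic
  calc ∫⁻ v in Set.Ici 0, ENNReal.ofReal (gaussDensity c S v)
    _ = ∫⁻ v in Set.Ici 0, ENNReal.ofReal (gaussDensity 0 S (c - v)) := by
      simp_rw [gaussDensity_eq_sub c, ← neg_sub c, gaussDensity_zero_neg]
    _ = ∫⁻ x in {x | ∀ i, x i ≤ c i}, ENNReal.ofReal (gaussDensity 0 S x) := by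
      rw [← hpre]
      exact (Measure.measurePreserving_sub_left volume c).setLIntegral_comp_preimage hmeas
        (f := fun x => ENNReal.ofReal (gaussDensity 0 S x)) (by fun_prop)
    _ = centeredGaussian S {x | ∀ i, x i ≤ c i} := (withDensity_apply _ hmeas).symm
    _ = ENNReal.ofReal (gaussCdf c S) := (ENNReal.ofReal_toReal (measure_ne_top _ _)).symm

end Orthants

section SkewGaussian

variable {m n : ℕ}

/-- The density of `H v + e` on the event `0 ≤ v`, where `v` and `e` are independent and centered
Gaussian with covariances `R` and `P`: the density of `H v + e` times the conditional probability
of the event. -/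
noncomputable def orthantDensity (P : Matrix (Fin m) (Fin m) ℝ) (H : Matrix (Fin m) (Fin n) ℝ)
    (R : Matrix (Fin n) (Fin n) ℝ) (w : Fin m → ℝ) : ℝ :=
  gaussDensity 0 (marginalCov P H R) w *
    gaussCdf (regressionMatrix P H R *ᵥ w) (condCov P H R)

lemma orthantDensity_nonneg {P : Matrix (Fin m) (Fin m) ℝ} (hP : P.PosDef)
    (H : Matrix (Fin m) (Fin n) ℝ) {R : Matrix (Fin n) (Fin n) ℝ} (hR : R.PosSemidef)
    (w : Fin m → ℝ) : 0 ≤ orthantDensity P H R w :=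
  mul_nonneg (gaussDensity_nonneg (marginalCov_posDef hP H hR) _ _) ENNReal.toReal_nonneg

lemma setLIntegral_Ici_gaussDensity_sub_mulVec {P : Matrix (Fin m) (Fin m) ℝ} (hP : P.PosDef)
    (H : Matrix (Fin m) (Fin n) ℝ) {R : Matrix (Fin n) (Fin n) ℝ} (hR : R.PosDef)
    (w : Fin m → ℝ) :
    ∫⁻ v in Set.Ici 0, ENNReal.ofReal (gaussDensity 0 P (w - H *ᵥ v)) ∂centeredGaussian R =
      ENNReal.ofReal (orthantDensity P H R w) := by
  have hA := gaussDensity_nonneg (marginalCov_posDef hP H hR.posSemidef) 0 w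
  calc ∫⁻ v in Set.Ici 0, ENNReal.ofReal (gaussDensity 0 P (w - H *ᵥ v)) ∂centeredGaussian R
    _ = ∫⁻ v in Set.Ici 0, ENNReal.ofReal
        (gaussDensity 0 P (w - H *ᵥ v) * gaussDensity 0 R v) := by
      rw [centeredGaussian, setLIntegral_withDensity_eq_setLIntegral_mul _ (by fun_prop)
        (by fun_prop) measurableSet_Ici]
      refine lintegral_congr fun v => ?_
      rw [Pi.mul_apply, mul_comm, ENNReal.ofReal_mul (gaussDensity_nonneg hP _ _)]
    _ = ENNReal.ofReal (gaussDensity 0 (marginalCov P H R) w) * ∫⁻ v in Set.Ici 0, ENNReal.ofReal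
        (gaussDensity (regressionMatrix P H R *ᵥ w) (condCov P H R) v) := by
      simp_rw [gaussDensity_sub_mulVec_mul hP H hR, ENNReal.ofReal_mul hA]
      exact lintegral_const_mul _ (by fun_prop)
    _ = ENNReal.ofReal (orthantDensity P H R w) := by
      rw [setLIntegral_Ici_gaussDensity (condCov_posDef hP H hR), orthantDensity,
        ENNReal.ofReal_mul hA]

lemma lintegral_gaussDensity_sub_mulVec_abs {P : Matrix (Fin m) (Fin m) ℝ} (hP : P.PosDef)
    (H : Matrix (Fin m) (Fin n) ℝ) {Ω : Matrix (Fin n) (Fin n) ℝ} (hΩ : Ω.PosDef) (i : Fin n)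
    (w : Fin m → ℝ) :
    ∫⁻ x, ENNReal.ofReal (gaussDensity 0 P (w - H *ᵥ fun i => |x i|)) ∂centeredGaussian Ω =
      ENNReal.ofReal (2 * ∑ b ∈ Finset.univ.filter (fun b : Fin n → Bool => b i = true),
        orthantDensity P H (sgnMat b Ω) w) := by
  have habs : Measurable fun (x : Fin n → ℝ) i => |x i| := by fun_prop
  calc ∫⁻ x, ENNReal.ofReal (gaussDensity 0 P (w - H *ᵥ fun i => |x i|)) ∂centeredGaussian Ω
    _ = ∫⁻ v, ENNReal.ofReal (gaussDensity 0 P (w - H *ᵥ v))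
        ∂(centeredGaussian Ω).map fun x i => |x i| := by
      rw [lintegral_map (by fun_prop) habs]
    _ = ∑ b, ENNReal.ofReal (orthantDensity P H (sgnMat b Ω) w) := by
      rw [map_abs_centeredGaussian hΩ, lintegral_finsetSum_measure]
      exact Finset.sum_congr rfl fun b _ =>
        setLIntegral_Ici_gaussDensity_sub_mulVec hP H (sgnMat_posDef b hΩ) w
    _ = ENNReal.ofReal (∑ b, orthantDensity P H (sgnMat b Ω) w) :=
      (ENNReal.ofReal_sum_of_nonneg fun b _ =>
        orthantDensity_nonneg hP H (sgnMat_posDef b hΩ).posSemidef w).symm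
    _ = _ := by
      rw [sum_bool_pi_eq_two_mul_sum_filter (fun b => orthantDensity P H (sgnMat b Ω) w)
        (fun b => by rw [sgnMat_not]) i]

theorem stmt15_general {Ω : Matrix (Fin n) (Fin n) ℝ} (hΩ : Ω.PosDef)
    {Ψ : Matrix (Fin m) (Fin m) ℝ} (hΨ : Ψ.PosDef) (α : Fin m → ℝ) (H : Matrix (Fin m) (Fin n) ℝ)
    {W : Matrix (Fin m) (Fin m) ℝ} (hW : IsUnit W) (i : Fin n) :
    ((centeredGaussian Ω).prod (centeredGaussian Ψ)).map
        (fun p => α + H *ᵥ (fun j => |p.1 j|) + W *ᵥ p.2) =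
      volume.withDensity fun u => ENNReal.ofReal
        (2 * ∑ b ∈ Finset.univ.filter (fun b : Fin n → Bool => b i = true),
          orthantDensity (W * Ψ * Wᵀ) H (sgnMat b Ω) (u - α)) := by
  have hsignal : Measurable fun x : Fin n → ℝ => α + H *ᵥ (fun j => |x j|) := by fun_prop
  have hnoise : Measurable (W *ᵥ · : (Fin m → ℝ) → Fin m → ℝ) := by fun_prop
  have hconv : ((centeredGaussian Ω).prod (centeredGaussian Ψ)).map
      (fun p => α + H *ᵥ (fun j => |p.1 j|) + W *ᵥ p.2) =
      ((centeredGaussian Ω).map fun x => α + H *ᵥ (fun j => |x j|)).conv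
        ((centeredGaussian Ψ).map (W *ᵥ ·)) := by
    rw [Measure.conv, Measure.map_prod_map _ _ hsignal hnoise, Measure.map_map (by fun_prop)
      (by fun_prop)]
    rfl
  have hshift (u x : Fin m → ℝ) : -(α + x) + u = u - α - x := by abel
  rw [hconv, map_mulVec_centeredGaussian hW hΨ, centeredGaussian.eq_def (W * Ψ * Wᵀ),
    conv_withDensity _ _ (by fun_prop)]
  congr with u
  rw [lintegral_map (by fun_prop) hsignal]
  simp_rw [hshift]
  exact lintegral_gaussDensity_sub_mulVec_abs (posDef_mul_mul_transpose hW hΨ) H hΩ i (u - α)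

end SkewGaussian

/-- The finite dimensional density of the skew-Gaussian process
`U = α + η|X₁| + ω X₂` with `X₁, X₂` independent `N_n(0,Ω)`:
`f_U(u) = 2 Σ_{l : l₁ = +1} φ_n(u - α; A_l) Φ_n(c_l; 0, B_l)` where
`A_l = ω²Ω + η²Ω_l`, `c_l = ηΩ_l A_l⁻¹(u-α)`, `B_l = Ω_l - η²Ω_l A_l⁻¹ Ω_l`. -/
theorem stmt15 (n : ℕ) (hn : 0 < n) (Ω : Matrix (Fin n) (Fin n) ℝ) (hΩ : Ω.PosDef)
    (α : Fin n → ℝ) (η ω : ℝ) (hω : 0 < ω) :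
    Measure.map
        (fun p : (Fin n → ℝ) × (Fin n → ℝ) =>
          α + η • (fun i => |p.1 i|) + ω • p.2)
        ((volume.withDensity fun x => ENNReal.ofReal (gaussDensity 0 Ω x)).prod
          (volume.withDensity fun x => ENNReal.ofReal (gaussDensity 0 Ω x)))
      = volume.withDensity (fun u => ENNReal.ofReal
          (2 * ∑ b ∈ Finset.univ.filter (fun b : Fin n → Bool => b ⟨0, hn⟩ = true),
            gaussDensity 0 (ω^2 • Ω + η^2 • sgnMat b Ω) (u - α) *
              gaussCdf
                (η • (sgnMat b Ω * (ω^2 • Ω + η^2 • sgnMat b Ω)⁻¹).mulVec (u - α))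
                (sgnMat b Ω - η^2 •
                  (sgnMat b Ω * (ω^2 • Ω + η^2 • sgnMat b Ω)⁻¹ * sgnMat b Ω)))) := by
  have hW : IsUnit (ω • (1 : Matrix (Fin n) (Fin n) ℝ)) := isUnit_one.smul (Units.mk0 ω hω.ne')
  simpa [centeredGaussian, orthantDensity, marginalCov, regressionMatrix, condCov, smul_mulVec,
    smul_smul, ← sq] using stmt15_general hΩ hΩ α (η • 1) hW ⟨0, hn⟩
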